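/- Let n = 3, s = 1, β(x) = e^{-x}, and p_{ij} = 1/6 for all i ≠ j. Let Y(t) = (y_1(t), y_2(t), y_3(t)) be the solution of the gradient flow of the relative entropy with initial data y_1(0) = 1, y_2(0) = 0, y_3(0) = −1. Then there exists a constant C > 0 such that diam Y(t) ≤ C t^{−1/2} for all t ≥ 1; in particular diam Y(t) → 0 as t → ∞. -/

import Mathlib

open Filter Topology

/-- The normalizing constant `Z = Σ_{k ≠ ℓ} β(|y_k - y_ℓ|²)`. -/
noncomputable def pairZ {E : Type*} [NormedAddCommGroup E] (β : ℝ → ℝ) {n : ℕ}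
    (Y : Fin n → E) : ℝ :=
  ∑ k : Fin n, ∑ l : Fin n, if k ≠ l then β (‖Y k - Y l‖ ^ 2) else 0

/-- The low-dimensional similarity `q_{ij}(Y) = β(|y_i - y_j|²) / Z(Y)`. -/
noncomputable def qfun {E : Type*} [NormedAddCommGroup E] (β : ℝ → ℝ) {n : ℕ}
    (Y : Fin n → E) (i j : Fin n) : ℝ :=
  β (‖Y i - Y j‖ ^ 2) / pairZ β Y

/-- The derivative `(log β)'` on `[0, ∞)`. -/
noncomputable def lbd (β : ℝ → ℝ) : ℝ → ℝ :=
  fun x => derivWithin (fun y => Real.log (β y)) (Set.Ici 0) x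

/-- `Y : ℝ → Fin n → E` is a solution of the gradient flow of the relative entropy:
`dy_i/dt = 4 Σ_{j ≠ i} (p_{ij} - q_{ij}(Y)) (y_i - y_j) (log β)'(|y_i - y_j|²)` for `t ≥ 0`. -/
def IsGradFlow {E : Type*} [NormedAddCommGroup E] [NormedSpace ℝ E] (β : ℝ → ℝ) {n : ℕ}
    (p : Fin n → Fin n → ℝ) (Y : ℝ → Fin n → E) : Prop :=
  ∀ i : Fin n, ∀ t ∈ Set.Ici (0 : ℝ),
    HasDerivWithinAt (fun u => Y u i)
      (∑ j ∈ Finset.univ.filter (· ≠ i),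
        (4 * (p i j - qfun β (Y t) i j) * lbd β (‖Y t i - Y t j‖ ^ 2)) • (Y t i - Y t j))
      (Set.Ici 0) t

/-- The diameter of the configuration `Y`, i.e. `max_{i,j} |y_i - y_j|`. -/
noncomputable def diamY {E : Type*} [NormedAddCommGroup E] {n : ℕ} (Y : Fin n → E) : ℝ :=
  Metric.diam (Set.range Y)

lemma aux_exp_le {a b M : ℝ} (hab : a ≤ b) (hb : b ≤ M) :
    Real.exp (-M) * (b - a) ^ 2 ≤ (Real.exp (-a) - Real.exp (-b)) * (b - a) := by
  have h1 : Real.exp (-a) = Real.exp (-b) * Real.exp (b - a) := by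
    rw [← Real.exp_add]; congr 1; ring
  have h2 := Real.add_one_le_exp (b - a)
  have h3 : Real.exp (-M) ≤ Real.exp (-b) := Real.exp_le_exp.mpr (by linarith)
  have h4 : Real.exp (-b) * (b - a) ≤ Real.exp (-a) - Real.exp (-b) := by
    rw [h1]
    nlinarith [Real.exp_pos (-b)]
  have h5 : Real.exp (-M) * (b - a) ≤ Real.exp (-a) - Real.exp (-b) :=
    le_trans (mul_le_mul_of_nonneg_right h3 (by linarith)) h4
  nlinarith [mul_le_mul_of_nonneg_right h5 (sub_nonneg.mpr hab)]

lemma aux_exp {a b M : ℝ} (ha : a ≤ M) (hb : b ≤ M) :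
    Real.exp (-M) * (b - a) ^ 2 ≤ (Real.exp (-a) - Real.exp (-b)) * (b - a) := by
  rcases le_total a b with h | h
  · exact aux_exp_le h hb
  · have := aux_exp_le h ha
    nlinarith

/-- Sum of squared pairwise distances. -/
noncomputable def auxV (Y : Fin 3 → ℝ) : ℝ :=
  (Y 0 - Y 1) ^ 2 + (Y 0 - Y 2) ^ 2 + (Y 1 - Y 2) ^ 2

/-- Sum of weights over unordered pairs. -/
noncomputable def auxW (Y : Fin 3 → ℝ) : ℝ :=
  Real.exp (-(Y 0 - Y 1) ^ 2) + Real.exp (-(Y 0 - Y 2) ^ 2) + Real.exp (-(Y 1 - Y 2) ^ 2)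

/-- Chebyshev-type sum. -/
noncomputable def auxT (Y : Fin 3 → ℝ) : ℝ :=
  (Real.exp (-(Y 0 - Y 1) ^ 2) - Real.exp (-(Y 0 - Y 2) ^ 2)) * ((Y 0 - Y 2) ^ 2 - (Y 0 - Y 1) ^ 2)
  + (Real.exp (-(Y 0 - Y 1) ^ 2) - Real.exp (-(Y 1 - Y 2) ^ 2)) *
      ((Y 1 - Y 2) ^ 2 - (Y 0 - Y 1) ^ 2)
  + (Real.exp (-(Y 0 - Y 2) ^ 2) - Real.exp (-(Y 1 - Y 2) ^ 2)) *
      ((Y 1 - Y 2) ^ 2 - (Y 0 - Y 2) ^ 2)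

lemma auxW_pos (Y : Fin 3 → ℝ) : 0 < auxW Y := by
  unfold auxW; positivity

lemma auxW_le (Y : Fin 3 → ℝ) : auxW Y ≤ 3 := by
  have h : ∀ x : ℝ, Real.exp (-x ^ 2) ≤ 1 := fun x =>
    Real.exp_le_one_iff.mpr (by nlinarith [sq_nonneg x])
  unfold auxW
  linarith [h (Y 0 - Y 1), h (Y 0 - Y 2), h (Y 1 - Y 2)]

lemma auxT_ge (Y : Fin 3 → ℝ) {M : ℝ} (hM : auxV Y ≤ M) :
    Real.exp (-M) * (auxV Y ^ 2 / 2) ≤ auxT Y := by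
  unfold auxV at *
  unfold auxT
  have n1 := sq_nonneg (Y 0 - Y 1)
  have n2 := sq_nonneg (Y 0 - Y 2)
  have n3 := sq_nonneg (Y 1 - Y 2)
  have h1 : (Y 0 - Y 1) ^ 2 ≤ M := by linarith
  have h2 : (Y 0 - Y 2) ^ 2 ≤ M := by linarith
  have h3 : (Y 1 - Y 2) ^ 2 ≤ M := by linarith
  have e1 := aux_exp h1 h2
  have e2 := aux_exp h1 h3
  have e3 := aux_exp h2 h3
  have : Real.exp (-M) * (((Y 0 - Y 1) ^ 2 + (Y 0 - Y 2) ^ 2 + (Y 1 - Y 2) ^ 2) ^ 2 / 2)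
    = Real.exp (-M) * ((Y 0 - Y 2) ^ 2 - (Y 0 - Y 1) ^ 2) ^ 2
     + Real.exp (-M) * ((Y 1 - Y 2) ^ 2 - (Y 0 - Y 1) ^ 2) ^ 2
     + Real.exp (-M) * ((Y 1 - Y 2) ^ 2 - (Y 0 - Y 2) ^ 2) ^ 2 := by ring
  linarith

lemma aux_lbd {x : ℝ} (hx : 0 ≤ x) : lbd (fun x => Real.exp (-x)) x = -1 := by
  unfold lbd
  simp only [Real.log_exp]
  exact ((hasDerivAt_id x).neg.hasDerivWithinAt).derivWithin
    (uniqueDiffOn_Ici (0 : ℝ) x hx)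

lemma aux_pairZ (Y : Fin 3 → ℝ) : pairZ (fun x => Real.exp (-x)) Y = 2 * auxW Y := by
  unfold pairZ auxW
  simp [Fin.sum_univ_three]
  rw [sub_sq_comm (Y 1) (Y 0), sub_sq_comm (Y 2) (Y 0), sub_sq_comm (Y 2) (Y 1)]
  ring

lemma aux_deriv (p : Fin 3 → Fin 3 → ℝ) (hp : ∀ i j, i ≠ j → p i j = 1 / 6)
    (Y : ℝ → Fin 3 → ℝ) (hflow : IsGradFlow (fun x => Real.exp (-x)) p Y)
    {t : ℝ} (ht : 0 ≤ t) :
    HasDerivWithinAt (fun u => auxV (Y u)) (-(4 / auxW (Y t) * auxT (Y t))) (Set.Ici 0) t := by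
  have h0 := hflow 0 t ht
  have h1 := hflow 1 t ht
  have h2 := hflow 2 t ht
  have key := (((h0.sub h1).pow 2).add ((h0.sub h2).pow 2)).add ((h1.sub h2).pow 2)
  refine key.congr_deriv ?_ 
  have f0 : (Finset.univ.filter (· ≠ (0 : Fin 3))) = {1, 2} := by decide
  have f1 : (Finset.univ.filter (· ≠ (1 : Fin 3))) = {0, 2} := by decide
  have f2 : (Finset.univ.filter (· ≠ (2 : Fin 3))) = {0, 1} := by decide
  rw [f0, f1, f2, Finset.sum_pair (by decide), Finset.sum_pair (by decide),
    Finset.sum_pair (by decide)]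
  simp only [aux_lbd (sq_nonneg _), qfun, aux_pairZ, hp 0 1 (by decide), hp 0 2 (by decide),
    hp 1 0 (by decide), hp 1 2 (by decide), hp 2 0 (by decide), hp 2 1 (by decide),
    Real.norm_eq_abs, sq_abs, smul_eq_mul, Pi.sub_apply]
  rw [sub_sq_comm (Y t 1) (Y t 0), sub_sq_comm (Y t 2) (Y t 0), sub_sq_comm (Y t 2) (Y t 1)]
  have hW := auxW_pos (Y t)
  have hWne := hW.ne'
  have hWdef : auxW (Y t) = Real.exp (-(Y t 0 - Y t 1) ^ 2) + Real.exp (-(Y t 0 - Y t 2) ^ 2)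
    + Real.exp (-(Y t 1 - Y t 2) ^ 2) := rfl
  unfold auxT
  generalize auxW (Y t) = W at *
  generalize Real.exp (-(Y t 0 - Y t 1) ^ 2) = A at *
  generalize Real.exp (-(Y t 0 - Y t 2) ^ 2) = B at *
  generalize Real.exp (-(Y t 1 - Y t 2) ^ 2) = D at *
  field_simp
  subst hWdef
  ring

lemma aux_main (p : Fin 3 → Fin 3 → ℝ) (hp : ∀ i j, i ≠ j → p i j = 1 / 6)
    (Y : ℝ → Fin 3 → ℝ) (hflow : IsGradFlow (fun x => Real.exp (-x)) p Y)
    (hY0 : Y 0 = ![1, 0, -1]) {t : ℝ} (ht : 0 < t) :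
    auxV (Y t) * (2 / 3 * Real.exp (-6) * t) ≤ 1 := by
  have hV0 : auxV (Y 0) = 6 := by
    rw [hY0]; simp [auxV]; norm_num
  have hnn : ∀ u, 0 ≤ auxV (Y u) := fun u => by unfold auxV; positivity
  have hcont : ContinuousOn (fun u => auxV (Y u)) (Set.Ici 0) := fun u hu =>
    (aux_deriv p hp Y hflow hu).continuousWithinAt
  have hanti : AntitoneOn (fun u => auxV (Y u)) (Set.Ici 0) := by
    refine antitoneOn_of_hasDerivWithinAt_nonpos (convex_Ici 0) hcont
      (f' := fun u => -(4 / auxW (Y u) * auxT (Y u))) ?_ ?_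
    · intro x hx
      exact (aux_deriv p hp Y hflow (interior_subset hx)).mono interior_subset
    · intro x _
      have h1 := auxT_ge (Y x) le_rfl
      have h2 : 0 ≤ auxT (Y x) := le_trans (by positivity) h1
      have h3 := auxW_pos (Y x)
      have : 0 ≤ 4 / auxW (Y x) * auxT (Y x) := by positivity
      linarith
  have hle6 : ∀ u, 0 ≤ u → auxV (Y u) ≤ 6 := fun u hu => by
    have := hanti (Set.mem_Ici.mpr le_rfl) (Set.mem_Ici.mpr hu) hu
    simpa [hV0] using this
  rcases (hnn t).eq_or_lt with h | hpos
  · rw [← h]; norm_num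
  have hpos' : ∀ u ∈ Set.Icc 0 t, 0 < auxV (Y u) := fun u hu =>
    lt_of_lt_of_le hpos (hanti (Set.mem_Ici.mpr hu.1) (Set.mem_Ici.mpr ht.le) hu.2)
  set c := 2 / 3 * Real.exp (-6) with hc
  have hd : ∀ u ∈ Set.Icc 0 t, HasDerivWithinAt (fun u => (auxV (Y u))⁻¹ - c * u)
      (-(-(4 / auxW (Y u) * auxT (Y u))) / auxV (Y u) ^ 2 - c * 1) (Set.Icc 0 t) u := by
    intro u hu
    exact (((aux_deriv p hp Y hflow hu.1).mono Set.Icc_subset_Ici_self).inv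
      (hpos' u hu).ne').sub ((hasDerivWithinAt_id u _).const_mul c)
  have hmono : MonotoneOn (fun u => (auxV (Y u))⁻¹ - c * u) (Set.Icc 0 t) := by
    refine monotoneOn_of_hasDerivWithinAt_nonneg (convex_Icc 0 t)
      (fun u hu => (hd u hu).continuousWithinAt)
      (fun x hx => (hd x (interior_subset hx)).mono interior_subset) ?_
    intro x hx
    have hx' := interior_subset hx
    have hv := hpos' x hx'
    have h1 := auxT_ge (Y x) (hle6 x hx'.1)
    have hW := auxW_pos (Y x)
    have hW3 := auxW_le (Y x)
    have h4 : 4 / 3 ≤ 4 / auxW (Y x) := by gcongr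
    have h5 : 4 / 3 * (Real.exp (-6) * (auxV (Y x) ^ 2 / 2)) ≤ 4 / auxW (Y x) * auxT (Y x) := by
      gcongr
    rw [neg_neg, mul_one, sub_nonneg, le_div_iff₀ (by positivity), hc]
    linarith
  have := hmono (Set.left_mem_Icc.mpr ht.le) (Set.right_mem_Icc.mpr ht.le) ht.le
  simp only [hV0] at this
  have h6 : c * t ≤ (auxV (Y t))⁻¹ := by
    norm_num at this
    linarith
  calc auxV (Y t) * (c * t) ≤ auxV (Y t) * (auxV (Y t))⁻¹ := by gcongr
    _ = 1 := mul_inv_cancel₀ hpos.ne'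

lemma aux_diam (Y : Fin 3 → ℝ) : diamY Y ≤ Real.sqrt (auxV Y) := by
  refine Metric.diam_le_of_forall_dist_le (Real.sqrt_nonneg _) ?_
  rintro _ ⟨i, rfl⟩ _ ⟨j, rfl⟩
  rw [Real.dist_eq]
  apply Real.abs_le_sqrt
  unfold auxV
  fin_cases i <;> fin_cases j <;> simp <;>
    nlinarith [sq_nonneg (Y 0 - Y 1), sq_nonneg (Y 0 - Y 2), sq_nonneg (Y 1 - Y 2)]

theorem collapse_example_sne
    (β : ℝ → ℝ) (hβ : β = fun x => Real.exp (-x))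
    (p : Fin 3 → Fin 3 → ℝ) (hp : ∀ i j, i ≠ j → p i j = 1 / 6)
    (Y : ℝ → Fin 3 → ℝ)
    (hflow : IsGradFlow β p Y)
    (hY0 : Y 0 = ![1, 0, -1]) :
    (∃ C : ℝ, 0 < C ∧ ∀ t : ℝ, 1 ≤ t → diamY (Y t) ≤ C * t ^ (-(1 : ℝ) / 2)) ∧
      Tendsto (fun t => diamY (Y t)) atTop (𝓝 0) := by
  subst hβ
  have main : ∃ C : ℝ, 0 < C ∧ ∀ t : ℝ, 1 ≤ t → diamY (Y t) ≤ C * t ^ (-(1 : ℝ) / 2) := by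
    refine ⟨Real.sqrt (2 / 3 * Real.exp (-6))⁻¹, by positivity, ?_⟩
    intro t ht
    have ht0 : 0 < t := by linarith
    have h := aux_main p hp Y hflow hY0 ht0
    refine (aux_diam (Y t)).trans ?_
    have h2 : t ^ (-(1 : ℝ) / 2) = Real.sqrt t⁻¹ := by
      rw [Real.sqrt_eq_rpow, Real.inv_rpow ht0.le, ← Real.rpow_neg ht0.le]
      congr 1; norm_num
    rw [h2, ← Real.sqrt_mul (by positivity), ← mul_inv]
    apply Real.sqrt_le_sqrt
    rw [← one_div, le_div_iff₀ (by positivity)]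
    exact h
  refine ⟨main, ?_⟩
  obtain ⟨C, _, hC⟩ := main
  have hlim : Tendsto (fun t : ℝ => C * t ^ (-(1 : ℝ) / 2)) atTop (𝓝 0) := by
    have := (tendsto_rpow_neg_atTop (show (0 : ℝ) < 1 / 2 by norm_num)).const_mul C
    simpa [neg_div] using this
  refine tendsto_of_tendsto_of_tendsto_of_le_of_le' tendsto_const_nhds hlim
    (Eventually.of_forall fun t => Metric.diam_nonneg) ?_
  filter_upwards [eventually_ge_atTop 1] with t ht using hC t ht
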